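/- Let S be an arbitrary subset of at most half of the chambers of a hyperplane arrangement 𝓗 in general position in ℝ². Assume |S| = Σ_{i=0}^2 C(k,i) = 1 + k + k(k−1)/2 for some real k ≥ 1, where C(k,i) denotes the generalized binomial coefficient. Then |∂S| ≥ k + 1. -/

import Mathlib

open Set Topology

noncomputable section

/-- A hyperplane arrangement of `n` affine hyperplanes in `ℝ^d`, given by
nonzero normal vectors and offsets: the `i`-th hyperplane is
`{x | ∑ j, normal i j * x j = offset i}`. -/
structure Arrangement (d n : ℕ) where
  normal : Fin n → (Fin d → ℝ)
  offset : Fin n → ℝ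
  normal_ne : ∀ i, normal i ≠ 0

/-- The thickening (regular open hull) `T_S` of a set `S` of chambers. -/
def thickening {d : ℕ} (S : Set (Set (Fin d → ℝ))) : Set (Fin d → ℝ) :=
  interior (closure (⋃ C ∈ S, C))

/-- The set of connected components of a subset `X` of a topological space. -/
def connComps {α : Type*} [TopologicalSpace α] (X : Set α) : Set (Set α) :=
  {c | ∃ x ∈ X, c = connectedComponentIn X x}

namespace Arrangement

variable {d n : ℕ} (𝓗 : Arrangement d n)

/-- The `i`-th hyperplane of the arrangement. -/
def H (i : Fin n) : Set (Fin d → ℝ) := {x | ∑ j, 𝓗.normal i j * x j = 𝓗.offset i}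

/-- The positive open half-space determined by the `i`-th hyperplane. -/
def pos (i : Fin n) : Set (Fin d → ℝ) := {x | 𝓗.offset i < ∑ j, 𝓗.normal i j * x j}

/-- The negative open half-space determined by the `i`-th hyperplane. -/
def neg (i : Fin n) : Set (Fin d → ℝ) := {x | ∑ j, 𝓗.normal i j * x j < 𝓗.offset i}

/-- The complement of the union of the hyperplanes. -/
def free : Set (Fin d → ℝ) := {x | ∀ i, x ∉ 𝓗.H i}

/-- The chambers: connected components of the complement of the hyperplanes. -/
def chambers : Set (Set (Fin d → ℝ)) :=
  {C | ∃ x ∈ 𝓗.free, C = connectedComponentIn 𝓗.free x}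

/-- General position: the normals of any `≤ d` hyperplanes are linearly independent
(so that their intersection is an affine subspace of the right dimension), and no
`d+1` hyperplanes have a common point. -/
def GeneralPosition : Prop :=
  (∀ A : Finset (Fin n), A.card ≤ d →
      LinearIndependent ℝ (fun i : A => 𝓗.normal i.1)) ∧
  (∀ A : Finset (Fin n), A.card = d + 1 → (⋂ i ∈ A, 𝓗.H i) = ∅)

/-- Hyperplane `e` separates `C` from `C'`. -/
def Separates (e : Fin n) (C C' : Set (Fin d → ℝ)) : Prop :=
  (C ⊆ 𝓗.pos e ∧ C' ⊆ 𝓗.neg e) ∨ (C ⊆ 𝓗.neg e ∧ C' ⊆ 𝓗.pos e)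

/-- Adjacency in the chamber graph: two chambers are adjacent iff they are separated
by exactly one hyperplane (equivalently, share a common facet). -/
def Adj (C C' : Set (Fin d → ℝ)) : Prop :=
  C ∈ 𝓗.chambers ∧ C' ∈ 𝓗.chambers ∧ ∃! e : Fin n, 𝓗.Separates e C C'

/-- The edge boundary of a set `S` of chambers, encoded as the set of ordered pairs
`(C, C')` of adjacent chambers with `C ∈ S` and `C' ∉ S` (each boundary edge is thus
counted exactly once). -/
def edgeBoundary (S : Set (Set (Fin d → ℝ))) :
    Set ((Set (Fin d → ℝ)) × (Set (Fin d → ℝ))) :=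
  {q | q.1 ∈ S ∧ q.2 ∉ S ∧ 𝓗.Adj q.1 q.2}

/-- The stratum `T_S(A) = T_S ∩ L_A`. -/
def stratum (S : Set (Set (Fin d → ℝ))) (A : Finset (Fin n)) : Set (Fin d → ℝ) :=
  thickening S ∩ ⋂ i ∈ A, 𝓗.H i

/-- The support of `S`: those `A` with nonempty stratum. -/
def supp (S : Set (Set (Fin d → ℝ))) : Set (Finset (Fin n)) :=
  {A | (𝓗.stratum S A).Nonempty}

/-- `H_f` bounds the stratum `T_S(A)`: the stratum lies entirely in one of the open
half-spaces of `H_f`, and `H_f` meets the closure of the stratum within `L_A`. -/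
def Bounds (f : Fin n) (S : Set (Set (Fin d → ℝ))) (A : Finset (Fin n)) : Prop :=
  (𝓗.stratum S A ⊆ 𝓗.pos f ∨ 𝓗.stratum S A ⊆ 𝓗.neg f) ∧
  (𝓗.H f ∩ closure (𝓗.stratum S A) ∩ ⋂ i ∈ A, 𝓗.H i).Nonempty

/-- `S` is strata-connected if every nonempty stratum is connected. -/
def StrataConnected (S : Set (Set (Fin d → ℝ))) : Prop :=
  ∀ A ∈ 𝓗.supp S, IsConnected (𝓗.stratum S A)

end Arrangement

/-- The generalized binomial coefficient `C(x, i) = x(x-1)⋯(x-i+1)/i!`. -/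
noncomputable def gchoose (x : ℝ) (i : ℕ) : ℝ :=
  (∏ j ∈ Finset.range i, (x - j)) / (Nat.factorial i)

/-!
Colour the chambers by membership in `S` and encode each by its set of positive sides, so that
crossing the `i`-th line toggles `i`. Call a line bichromatic if chambers of both colours lie along
it. Following a bichromatic line to a change of colour, one finds a boundary edge on the line itself
or on a line crossing it there, in which case boundary edges of that crossing line lie on both
sides of the bichromatic line. A line carrying `m` boundary edges is cut by such lines into parts
each of which contains one of these edges, so it accounts for at most `m - 1` of them besides
itself. Hence there are at most `|∂S|` bichromatic lines.

If every line is bichromatic, then `S` is at most half of the `1 + n + C(n, 2)` chambers. Otherwise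
all monochromatic lines have the same colour, since they cross each other. A chamber of the other
colour then has only bichromatic walls, so it is determined by its trace on the `m` bichromatic
lines. By the Sauer–Shelah lemma there are at most `1 + m + C(m, 2)` traces, and `m + 1` of them are
used up along a monochromatic line. As `S` is at most half of all chambers, either way
`|S| ≤ 1 + C(m, 2) ≤ 1 + C(|∂S|, 2)`.
-/

open scoped Finset symmDiff

theorem le_one_add_choose_two (a : ℕ) : a ≤ 1 + a.choose 2 := by
  induction a with
  | zero => simp
  | succ a ih =>
    rw [Nat.choose_succ_succ' a 1, Nat.choose_one_right]
    cases a <;> lia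

section SetFamily

variable {α : Type*} [DecidableEq α] {𝒜 S : Finset (Finset α)}

/-- The members of `𝒜` that stay in `𝒜` when `i` is toggled. When `𝒜` is the family of sign vectors
of the chambers of an arrangement, these are the chambers having the `i`-th hyperplane as a wall. -/
def wallFamily (𝒜 : Finset (Finset α)) (i : α) : Finset (Finset α) :=
  {σ ∈ 𝒜 | σ ∆ {i} ∈ 𝒜}

/-- The part of the edge boundary of `S` in `𝒜` that lies in direction `i`; an edge
`{σ, σ ∆ {i}}` is recorded by its endpoint `σ ∈ S`. -/
def boundaryFamily (𝒜 S : Finset (Finset α)) (i : α) : Finset (Finset α) :=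
  {σ ∈ S | σ ∆ {i} ∈ 𝒜 \ S}

/-- A family of finite sets is well graded if any member can be moved one step closer to any other
member without leaving the family. -/
def WellGraded (𝒜 : Finset (Finset α)) : Prop :=
  ∀ σ ∈ 𝒜, ∀ τ ∈ 𝒜, σ ≠ τ → ∃ i ∈ σ ∆ τ, σ ∆ {i} ∈ 𝒜

theorem mem_wallFamily {σ : Finset α} {i : α} :
    σ ∈ wallFamily 𝒜 i ↔ σ ∈ 𝒜 ∧ σ ∆ {i} ∈ 𝒜 :=
  Finset.mem_filter

theorem mem_boundaryFamily {σ : Finset α} {i : α} :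
    σ ∈ boundaryFamily 𝒜 S i ↔ σ ∈ S ∧ σ ∆ {i} ∈ 𝒜 ∧ σ ∆ {i} ∉ S := by
  rw [boundaryFamily, Finset.mem_filter, Finset.mem_sdiff]

theorem mem_symmDiff_singleton {σ : Finset α} {i l : α} :
    l ∈ σ ∆ {i} ↔ (l ∈ σ ↔ l ≠ i) := by
  rw [Finset.mem_symmDiff, Finset.mem_singleton]
  tauto

theorem symmDiff_singleton_mem_wallFamily {σ : Finset α} {i : α} (hσ : σ ∈ wallFamily 𝒜 i) :
    σ ∆ {i} ∈ wallFamily 𝒜 i := by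
  rw [mem_wallFamily] at hσ ⊢
  rw [symmDiff_symmDiff_cancel_right]
  exact hσ.symm

/-- Deleting `a` from all members identifies two of them and preserves edges in other directions. -/
theorem card_lt_card_of_wallFamily_nonempty {𝓑 : Finset (Finset α)} (h𝓑 : 𝓑.Nonempty)
    {D : Finset α} (hD : ∀ a ∈ D, (wallFamily 𝓑 a).Nonempty) : #D < #𝓑 := by
  induction D using Finset.induction_on generalizing 𝓑 with
  | empty => simpa using h𝓑
  | insert a D ha ih =>
    rw [Finset.forall_mem_insert] at hD
    obtain ⟨⟨σ, hσ⟩, hD⟩ := hD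
    rw [mem_wallFamily] at hσ
    have hlt : #(𝓑.image (Finset.erase · a)) < #𝓑 := by
      refine Finset.card_image_le.lt_of_ne fun h ↦ ?_
      have heq : σ ∆ {a} = σ :=
        Finset.injOn_of_card_image_eq h hσ.2 hσ.1 (by ext l; grind [mem_symmDiff_singleton])
      simp at heq
    have hedges : ∀ b ∈ D, (wallFamily (𝓑.image (Finset.erase · a)) b).Nonempty := by
      intro b hb
      obtain ⟨τ, hτ⟩ := hD b hb
      rw [mem_wallFamily] at hτ
      have hba : b ≠ a := ne_of_mem_of_not_mem hb ha
      have hcomm : (τ ∆ {b}).erase a = τ.erase a ∆ {b} := by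
        ext l; grind [mem_symmDiff_singleton]
      exact ⟨τ.erase a, mem_wallFamily.2 ⟨Finset.mem_image_of_mem _ hτ.1,
        hcomm ▸ Finset.mem_image_of_mem _ hτ.2⟩⟩
    rw [Finset.card_insert_of_notMem ha]
    exact (Nat.succ_le_of_lt (ih (h𝓑.image _) hedges)).trans_lt hlt

theorem subset_and_shatters_of_image_inter_shatters {L s : Finset α}
    (hs : (𝒜.image (· ∩ L)).Shatters s) : s ⊆ L ∧ 𝒜.Shatters s := by
  obtain ⟨t, ht, hst⟩ := hs.exists_superset
  obtain ⟨_, _, rfl⟩ := Finset.mem_image.1 ht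
  have hsL : s ⊆ L := Finset.Subset.trans hst Finset.inter_subset_right
  refine ⟨hsL, fun t ht ↦ ?_⟩
  obtain ⟨_, hu, rfl⟩ := hs ht
  obtain ⟨v, hv, rfl⟩ := Finset.mem_image.1 hu
  refine ⟨v, hv, ?_⟩
  rw [Finset.inter_comm v L, ← Finset.inter_assoc, Finset.inter_eq_left.2 hsL]

theorem card_image_inter_le_sum_vcDim (𝒜 : Finset (Finset α)) (L : Finset α) :
    #(𝒜.image (· ∩ L)) ≤ ∑ k ∈ Finset.Iic 𝒜.vcDim, (#L).choose k := by
  refine (Finset.card_le_card_shatterer _).trans ?_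
  simp_rw [← Finset.card_powersetCard]
  refine (Finset.card_le_card fun s hs ↦ Finset.mem_biUnion.2 ⟨#s, ?_⟩).trans
    Finset.card_biUnion_le
  obtain ⟨hsL, hs⟩ := subset_and_shatters_of_image_inter_shatters (Finset.mem_shatterer.1 hs)
  exact ⟨Finset.mem_Iic.2 hs.card_le_vcDim, Finset.mem_powersetCard.2 ⟨hsL, rfl⟩⟩

theorem WellGraded.exists_edge (h𝒜 : WellGraded 𝒜) {σ τ : Finset α} (hσ : σ ∈ 𝒜) (hτ : τ ∈ 𝒜)
    (hσS : σ ∈ S) (hτS : τ ∉ S) : ∃ ρ ∈ 𝒜, ∃ i, ρ ∆ {i} ∈ 𝒜 ∧ ρ ∈ S ∧ ρ ∆ {i} ∉ S := by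
  obtain ⟨ρ, hρ, hmin⟩ := Finset.exists_min_image (𝒜 ∩ S) (fun ρ ↦ #(ρ ∆ τ))
    ⟨σ, Finset.mem_inter.2 ⟨hσ, hσS⟩⟩
  rw [Finset.mem_inter] at hρ
  obtain ⟨i, hi, hρi⟩ := h𝒜 ρ hρ.1 τ hτ (ne_of_mem_of_not_mem hρ.2 hτS)
  refine ⟨ρ, hρ.1, i, hρi, hρ.2, fun hS ↦ ?_⟩
  have herase : ρ ∆ {i} ∆ τ = (ρ ∆ τ).erase i := by
    ext l
    rw [symmDiff_right_comm, mem_symmDiff_singleton, Finset.mem_erase]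
    grind
  have hcloser := hmin (ρ ∆ {i}) (Finset.mem_inter.2 ⟨hρi, hS⟩)
  rw [herase] at hcloser
  exact (Finset.card_erase_lt_of_mem hi).not_ge hcloser

/-- The combinatorial properties of the sign vectors of the chambers of a line arrangement in
general position that the isoperimetric inequality depends on. -/
structure IsPlanarFamily (𝒜 : Finset (Finset α)) : Prop where
  wellGraded : WellGraded 𝒜
  wellGraded_wallFamily : ∀ i, WellGraded (wallFamily 𝒜 i)
  crossing : ∀ i j, (wallFamily (wallFamily 𝒜 i) j).Nonempty
  vcDim_le : 𝒜.vcDim ≤ 2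

namespace IsPlanarFamily

theorem card_image_inter_le (h𝒜 : IsPlanarFamily 𝒜) (L : Finset α) :
    #(𝒜.image (· ∩ L)) ≤ 1 + #L + (#L).choose 2 := by
  refine (card_image_inter_le_sum_vcDim 𝒜 L).trans <|
    (Finset.sum_le_sum_of_subset (Finset.Iic_subset_Iic.2 h𝒜.vcDim_le)).trans_eq ?_
  rw [← Nat.range_succ_eq_Iic]
  simp [Finset.sum_range_succ]

theorem card_lt_card_image_inter_wallFamily (h𝒜 : IsPlanarFamily 𝒜) (h : α) (L : Finset α) :
    #L < #((wallFamily 𝒜 h).image (· ∩ L)) := by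
  obtain ⟨σ, hσ⟩ := h𝒜.crossing h h
  refine card_lt_card_of_wallFamily_nonempty (.image ⟨σ, (mem_wallFamily.1 hσ).1⟩ _) ?_
  intro l hl
  obtain ⟨ρ, hρ⟩ := h𝒜.crossing h l
  rw [mem_wallFamily] at hρ
  have htrace : ρ ∆ {l} ∩ L = (ρ ∩ L) ∆ {l} := by
    ext a; grind [mem_symmDiff_singleton]
  exact ⟨ρ ∩ L, mem_wallFamily.2
    ⟨Finset.mem_image_of_mem _ hρ.1, htrace ▸ Finset.mem_image_of_mem _ hρ.2⟩⟩

end IsPlanarFamily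

variable [Fintype α]

/-- The directions `i` along which both members and non-members of `S` occur. For an arrangement,
these are the hyperplanes whose adjacent chambers are not all on the same side of the partition
into `S` and its complement. -/
def bichromatic (𝒜 S : Finset (Finset α)) : Finset α :=
  {i | ∃ σ ∈ wallFamily 𝒜 i, ∃ τ ∈ wallFamily 𝒜 i, σ ∈ S ∧ τ ∉ S}

theorem mem_bichromatic {i : α} : i ∈ bichromatic 𝒜 S ↔
    ∃ σ ∈ wallFamily 𝒜 i, ∃ τ ∈ wallFamily 𝒜 i, σ ∈ S ∧ τ ∉ S := by
  simp [bichromatic]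

theorem mem_iff_mem_of_mem_wallFamily {i : α} (hi : i ∉ bichromatic 𝒜 S) {σ τ : Finset α}
    (hσ : σ ∈ wallFamily 𝒜 i) (hτ : τ ∈ wallFamily 𝒜 i) : σ ∈ S ↔ τ ∈ S := by
  rw [mem_bichromatic] at hi
  push Not at hi
  exact ⟨hi σ hσ τ hτ, hi τ hτ σ hσ⟩

/-- The colour changes somewhere along the walls in direction `l`, where these cross some other
direction `i`; on both sides of the crossing, direction `i` then carries a boundary edge. -/
theorem exists_wallFamily_boundaryFamily_nonempty {l : α} (hwg : WellGraded (wallFamily 𝒜 l))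
    (hl : l ∈ bichromatic 𝒜 S) (hempty : boundaryFamily 𝒜 S l = ∅) :
    ∃ i, (wallFamily (boundaryFamily 𝒜 S i) l).Nonempty := by
  obtain ⟨σ, hσ, τ, hτ, hσS, hτS⟩ := mem_bichromatic.1 hl
  obtain ⟨ρ, hρ, i, hρi, hρS, hρiS⟩ := hwg.exists_edge hσ hτ hσS hτS
  have same_color : ∀ π ∈ wallFamily 𝒜 l, π ∈ S → π ∆ {l} ∈ S := by
    intro π hπ hπS
    by_contra h
    exact Finset.notMem_empty π (hempty ▸ mem_boundaryFamily.2 ⟨hπS, (mem_wallFamily.1 hπ).2, h⟩)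
  have hρli : ρ ∆ {l} ∆ {i} ∈ wallFamily 𝒜 l := by
    rw [symmDiff_right_comm]
    exact symmDiff_singleton_mem_wallFamily hρi
  have hρliS : ρ ∆ {l} ∆ {i} ∉ S := fun h ↦ hρiS <| by
    have := same_color _ hρli h
    rwa [symmDiff_right_comm, symmDiff_symmDiff_cancel_right] at this
  exact ⟨i, ρ, mem_wallFamily.2
    ⟨mem_boundaryFamily.2 ⟨hρS, (mem_wallFamily.1 hρi).1, hρiS⟩,
      mem_boundaryFamily.2 ⟨same_color ρ hρ hρS, (mem_wallFamily.1 hρli).1, hρliS⟩⟩⟩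

theorem card_bichromatic_le_sum_boundaryFamily (hwg : ∀ i, WellGraded (wallFamily 𝒜 i)) :
    #(bichromatic 𝒜 S) ≤ ∑ i, #(boundaryFamily 𝒜 S i) := by
  let carriers : Finset α := {i | (boundaryFamily 𝒜 S i).Nonempty}
  let spread (i : α) : Finset α := {l | (wallFamily (boundaryFamily 𝒜 S i) l).Nonempty}
  have hcover : bichromatic 𝒜 S ⊆ carriers.biUnion fun i ↦ insert i (spread i) := by
    intro l hl
    rw [Finset.mem_biUnion]
    by_cases hempty : boundaryFamily 𝒜 S l = ∅
    · obtain ⟨i, σ, hσ⟩ := exists_wallFamily_boundaryFamily_nonempty (hwg l) hl hempty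
      exact ⟨i, by simpa [carriers] using ⟨σ, (mem_wallFamily.1 hσ).1⟩,
        Finset.mem_insert_of_mem (by simpa [spread] using ⟨σ, hσ⟩)⟩
    · exact ⟨l, by simpa [carriers] using Finset.nonempty_iff_ne_empty.2 hempty,
        Finset.mem_insert_self _ _⟩
  calc #(bichromatic 𝒜 S)
      ≤ #(carriers.biUnion fun i ↦ insert i (spread i)) := Finset.card_le_card hcover
    _ ≤ ∑ i ∈ carriers, #(insert i (spread i)) := Finset.card_biUnion_le
    _ ≤ ∑ i ∈ carriers, #(boundaryFamily 𝒜 S i) := by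
      refine Finset.sum_le_sum fun i hi ↦ (Finset.card_insert_le _ _).trans ?_
      exact card_lt_card_of_wallFamily_nonempty (by simpa [carriers] using hi)
        fun l hl ↦ by simpa [spread] using hl
    _ ≤ ∑ i, #(boundaryFamily 𝒜 S i) :=
      Finset.sum_le_sum_of_subset (Finset.subset_univ _)

namespace IsPlanarFamily

/-- Any two monochromatic lines have the same colour, because they cross. -/
theorem mem_iff_mem_of_notMem_bichromatic (h𝒜 : IsPlanarFamily 𝒜) {i j : α}
    (hi : i ∉ bichromatic 𝒜 S) (hj : j ∉ bichromatic 𝒜 S) {σ τ : Finset α}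
    (hσ : σ ∈ wallFamily 𝒜 i) (hτ : τ ∈ wallFamily 𝒜 j) : σ ∈ S ↔ τ ∈ S := by
  obtain ⟨ρ, hρ⟩ := h𝒜.crossing i j
  obtain ⟨hρi, hρij⟩ := mem_wallFamily.1 hρ
  have hρj : ρ ∈ wallFamily 𝒜 j :=
    mem_wallFamily.2 ⟨(mem_wallFamily.1 hρi).1, (mem_wallFamily.1 hρij).1⟩
  exact (mem_iff_mem_of_mem_wallFamily hi hσ hρi).trans
    (mem_iff_mem_of_mem_wallFamily hj hρj hτ)

/-- The first wall crossed on the way from `σ` to a different member with the same trace would be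
a monochromatic line, which has the colour of `τ₀`. -/
theorem eq_of_inter_bichromatic_eq (h𝒜 : IsPlanarFamily 𝒜) {h : α} (hh : h ∉ bichromatic 𝒜 S)
    {τ₀ : Finset α} (hτ₀ : τ₀ ∈ wallFamily 𝒜 h) {σ τ : Finset α} (hσ : σ ∈ 𝒜)
    (hστ₀ : ¬(σ ∈ S ↔ τ₀ ∈ S)) (hτ : τ ∈ 𝒜)
    (htrace : σ ∩ bichromatic 𝒜 S = τ ∩ bichromatic 𝒜 S) : σ = τ := by
  by_contra hne
  obtain ⟨i, hi, hσi⟩ := h𝒜.wellGraded σ hσ τ hτ hne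
  have hi' : i ∉ bichromatic 𝒜 S := by
    intro hiL
    have htrace_i : i ∈ σ ∩ bichromatic 𝒜 S ↔ i ∈ τ ∩ bichromatic 𝒜 S := by rw [htrace]
    rw [Finset.mem_symmDiff] at hi
    grind
  exact hστ₀ (h𝒜.mem_iff_mem_of_notMem_bichromatic hi' hh (mem_wallFamily.2 ⟨hσ, hσi⟩) hτ₀)

/-- Let `m = #(bichromatic 𝒜 S)`. On the bichromatic lines, the chambers of the colour other than
that of `τ₀` have pairwise distinct traces, and none of these is among the more than `m` traces of
the chambers along `h`; there are at most `1 + m + m.choose 2` traces in all. -/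
theorem card_filter_not_iff_le_choose_bichromatic (h𝒜 : IsPlanarFamily 𝒜) {h : α}
    (hh : h ∉ bichromatic 𝒜 S) {τ₀ : Finset α} (hτ₀ : τ₀ ∈ wallFamily 𝒜 h) :
    #{σ ∈ 𝒜 | ¬(σ ∈ S ↔ τ₀ ∈ S)} ≤ (#(bichromatic 𝒜 S)).choose 2 := by
  set L := bichromatic 𝒜 S
  set X : Finset (Finset α) := {σ ∈ 𝒜 | ¬(σ ∈ S ↔ τ₀ ∈ S)}
  have determined : ∀ σ ∈ X, ∀ τ ∈ 𝒜, σ ∩ L = τ ∩ L → σ = τ := fun σ hσ τ hτ ↦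
    h𝒜.eq_of_inter_bichromatic_eq hh hτ₀ (Finset.mem_filter.1 hσ).1 (Finset.mem_filter.1 hσ).2 hτ
  have hXcard : #(X.image (· ∩ L)) = #X :=
    Finset.card_image_of_injOn fun σ hσ τ hτ ↦ determined σ hσ τ (Finset.mem_filter.1 hτ).1
  have hdisj : Disjoint (X.image (· ∩ L)) ((wallFamily 𝒜 h).image (· ∩ L)) := by
    simp only [Finset.disjoint_left, Finset.mem_image]
    rintro _ ⟨σ, hσ, rfl⟩ ⟨τ, hτ, htrace⟩
    obtain rfl := determined σ hσ τ (mem_wallFamily.1 hτ).1 htrace.symm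
    exact (Finset.mem_filter.1 hσ).2 (mem_iff_mem_of_mem_wallFamily hh hτ hτ₀)
  have hsub : X.image (· ∩ L) ∪ (wallFamily 𝒜 h).image (· ∩ L) ⊆ 𝒜.image (· ∩ L) :=
    Finset.union_subset (Finset.image_subset_image (Finset.filter_subset _ _))
      (Finset.image_subset_image (Finset.filter_subset _ _))
  have hle := (Finset.card_le_card hsub).trans (h𝒜.card_image_inter_le L)
  rw [Finset.card_union_of_disjoint hdisj, hXcard] at hle
  have := h𝒜.card_lt_card_image_inter_wallFamily h L
  lia

theorem card_le_one_add_choose_bichromatic (h𝒜 : IsPlanarFamily 𝒜) (hS : S ⊆ 𝒜)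
    (hhalf : 2 * #S ≤ #𝒜) : #S ≤ 1 + (#(bichromatic 𝒜 S)).choose 2 := by
  by_cases hL : bichromatic 𝒜 S = Finset.univ
  · have htrace := h𝒜.card_image_inter_le (bichromatic 𝒜 S)
    simp only [hL, Finset.inter_univ, Finset.image_id'] at htrace ⊢
    have := le_one_add_choose_two #(Finset.univ : Finset α)
    lia
  · obtain ⟨h, hh⟩ : ∃ h, h ∉ bichromatic 𝒜 S := by
      simpa [Finset.eq_univ_iff_forall] using hL
    obtain ⟨τ₀, hτ₀⟩ := h𝒜.crossing h h
    have hX := h𝒜.card_filter_not_iff_le_choose_bichromatic hh (mem_wallFamily.1 hτ₀).1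
    suffices #S ≤ #{σ ∈ 𝒜 | ¬(σ ∈ S ↔ τ₀ ∈ S)} by lia
    by_cases hτ₀S : τ₀ ∈ S
    · have hcompl : ({σ ∈ 𝒜 | ¬(σ ∈ S ↔ τ₀ ∈ S)} : Finset _) = 𝒜 \ S := by
        ext σ; simp [hτ₀S]
      rw [hcompl, Finset.card_sdiff_of_subset hS]
      lia
    · exact Finset.card_le_card fun σ hσ ↦ by simp [hτ₀S, hσ, hS hσ]

theorem card_le_one_add_choose_sum_boundaryFamily (h𝒜 : IsPlanarFamily 𝒜) (hS : S ⊆ 𝒜)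
    (hhalf : 2 * #S ≤ #𝒜) : #S ≤ 1 + (∑ i, #(boundaryFamily 𝒜 S i)).choose 2 :=
  (h𝒜.card_le_one_add_choose_bichromatic hS hhalf).trans <| Nat.add_le_add_left
    (Nat.choose_le_choose 2 (card_bichromatic_le_sum_boundaryFamily h𝒜.wellGraded_wallFamily)) 1

end IsPlanarFamily

end SetFamily

namespace Arrangement

open scoped Matrix

variable {d n : ℕ} {𝓗 : Arrangement d n} {i : Fin n} {σ τ : Finset (Fin n)} {x y z : Fin d → ℝ}

/-- The affine function that vanishes on the `i`-th hyperplane and is positive on its positive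
side. -/
def form (𝓗 : Arrangement d n) (i : Fin n) : (Fin d → ℝ) →ᵃ[ℝ] ℝ :=
  (dotProductBilin ℝ ℝ (𝓗.normal i)).toAffineMap - AffineMap.const ℝ _ (𝓗.offset i)

/-- The function `form 𝓗 i`, with its sign changed when `i ∉ σ`. A point has sign vector `σ` when
all these functions are positive there. -/
def signedForm (𝓗 : Arrangement d n) (σ : Finset (Fin n)) (i : Fin n) : (Fin d → ℝ) →ᵃ[ℝ] ℝ :=
  if i ∈ σ then 𝓗.form i else -𝓗.form i

/-- The points lying on the positive side of exactly the hyperplanes in `σ`, and on the negative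
side of all others. -/
def cell (𝓗 : Arrangement d n) (σ : Finset (Fin n)) : Set (Fin d → ℝ) :=
  {x | ∀ i, 0 < 𝓗.signedForm σ i x}

/-- The intersection of the closed half-spaces whose open versions cut out `cell 𝓗 σ`; it may be
nonempty although the cell is empty. -/
def closedCell (𝓗 : Arrangement d n) (σ : Finset (Fin n)) : Set (Fin d → ℝ) :=
  {x | ∀ i, 0 ≤ 𝓗.signedForm σ i x}

open Classical in
/-- The sign vectors of the chambers, a chamber being encoded by the set of hyperplanes on whose
positive side it lies. -/
def topes (𝓗 : Arrangement d n) : Finset (Finset (Fin n)) :=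
  {σ | (𝓗.cell σ).Nonempty}

theorem mem_topes : σ ∈ 𝓗.topes ↔ (𝓗.cell σ).Nonempty := by
  simp [topes]

theorem form_apply : 𝓗.form i x = 𝓗.normal i ⬝ᵥ x - 𝓗.offset i := rfl

theorem mem_H_iff_form : x ∈ 𝓗.H i ↔ 𝓗.form i x = 0 :=
  sub_eq_zero.symm

theorem mem_pos_iff_form : x ∈ 𝓗.pos i ↔ 0 < 𝓗.form i x :=
  Iff.symm (sub_pos (a := 𝓗.normal i ⬝ᵥ x))

theorem mem_neg_iff_form : x ∈ 𝓗.neg i ↔ 𝓗.form i x < 0 :=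
  Iff.symm (sub_neg (a := 𝓗.normal i ⬝ᵥ x))

theorem signedForm_apply : 𝓗.signedForm σ i x = if i ∈ σ then 𝓗.form i x else -𝓗.form i x := by
  unfold signedForm
  split_ifs <;> rfl

theorem signedForm_eq_zero_iff : 𝓗.signedForm σ i x = 0 ↔ x ∈ 𝓗.H i := by
  rw [signedForm_apply, mem_H_iff_form]
  split_ifs <;> simp

theorem signedForm_of_notMem_symmDiff (hi : i ∉ σ ∆ τ) :
    𝓗.signedForm τ i = 𝓗.signedForm σ i := by
  unfold signedForm
  congr 1
  grind [Finset.mem_symmDiff]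

theorem signedForm_of_mem_symmDiff (hi : i ∈ σ ∆ τ) :
    𝓗.signedForm τ i = -𝓗.signedForm σ i := by
  rw [Finset.mem_symmDiff] at hi
  rcases hi with ⟨h, h'⟩ | ⟨h, h'⟩ <;> simp [signedForm, h, h']

theorem cell_subset_closedCell : 𝓗.cell σ ⊆ 𝓗.closedCell σ :=
  fun _ hx i ↦ (hx i).le

theorem exists_mem_closedCell (𝓗 : Arrangement d n) (x : Fin d → ℝ) : ∃ σ, x ∈ 𝓗.closedCell σ := by
  refine ⟨Finset.univ.filter (0 < 𝓗.form · x), fun i ↦ ?_⟩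
  rw [signedForm_apply]
  grind

theorem mem_free_iff_exists_mem_cell : x ∈ 𝓗.free ↔ ∃ σ, x ∈ 𝓗.cell σ := by
  refine ⟨fun hx ↦ ?_, fun ⟨σ, hσ⟩ i hi ↦ (hσ i).ne' (signedForm_eq_zero_iff.2 hi)⟩
  obtain ⟨σ, hσ⟩ := 𝓗.exists_mem_closedCell x
  exact ⟨σ, fun i ↦ (hσ i).lt_of_ne' (mt signedForm_eq_zero_iff.1 (hx i))⟩

theorem mem_iff_form_pos_of_mem_cell (hx : x ∈ 𝓗.cell σ) (i : Fin n) :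
    i ∈ σ ↔ 0 < 𝓗.form i x := by
  have := hx i
  rw [signedForm_apply] at this
  grind

theorem form_neg_of_mem_cell (hx : x ∈ 𝓗.cell σ) (hi : i ∉ σ) : 𝓗.form i x < 0 := by
  simpa [signedForm_apply, hi] using hx i

theorem eq_of_mem_cell (hσ : x ∈ 𝓗.cell σ) (hτ : x ∈ 𝓗.cell τ) : σ = τ := by
  ext i
  rw [mem_iff_form_pos_of_mem_cell hσ, mem_iff_form_pos_of_mem_cell hτ]

theorem injOn_cell_topes : InjOn 𝓗.cell 𝓗.topes := by
  intro σ hσ τ _ h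
  obtain ⟨x, hx⟩ := mem_topes.1 hσ
  exact eq_of_mem_cell hx (h ▸ hx)

theorem convex_cell (𝓗 : Arrangement d n) (σ : Finset (Fin n)) : Convex ℝ (𝓗.cell σ) := by
  have : 𝓗.cell σ = ⋂ i, 𝓗.signedForm σ i ⁻¹' Ioi 0 := by ext; simp [cell]
  exact this ▸ convex_iInter fun i ↦ (convex_Ioi 0).affine_preimage _

theorem convex_H (𝓗 : Arrangement d n) (i : Fin n) : Convex ℝ (𝓗.H i) := by
  have : 𝓗.H i = 𝓗.form i ⁻¹' {0} := by ext; exact mem_H_iff_form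
  exact this ▸ (convex_singleton 0).affine_preimage _

theorem connectedComponentIn_free_eq_cell (hx : x ∈ 𝓗.cell σ) :
    connectedComponentIn 𝓗.free x = 𝓗.cell σ := by
  have hfree : x ∈ 𝓗.free := mem_free_iff_exists_mem_cell.2 ⟨σ, hx⟩
  refine Subset.antisymm (fun y hy i ↦ ?_) ?_
  · by_contra! hneg
    obtain ⟨z, hz, hz0⟩ := isPreconnected_connectedComponentIn.intermediate_value hy
      (mem_connectedComponentIn hfree)
      (𝓗.signedForm σ i).continuous_of_finiteDimensional.continuousOn ⟨hneg, (hx i).le⟩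
    exact connectedComponentIn_subset 𝓗.free x hz i (signedForm_eq_zero_iff.1 hz0)
  · exact (𝓗.convex_cell σ).isPreconnected.subset_connectedComponentIn hx
      fun y hy ↦ mem_free_iff_exists_mem_cell.2 ⟨σ, hy⟩

theorem chambers_eq_image_cell (𝓗 : Arrangement d n) : 𝓗.chambers = 𝓗.cell '' 𝓗.topes := by
  ext C
  constructor
  · rintro ⟨x, hx, rfl⟩
    obtain ⟨σ, hσ⟩ := mem_free_iff_exists_mem_cell.1 hx
    exact ⟨σ, mem_topes.2 ⟨x, hσ⟩, (connectedComponentIn_free_eq_cell hσ).symm⟩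
  · rintro ⟨σ, hσ, rfl⟩
    obtain ⟨x, hx⟩ := mem_topes.1 hσ
    exact ⟨x, mem_free_iff_exists_mem_cell.2 ⟨σ, hx⟩, (connectedComponentIn_free_eq_cell hx).symm⟩

theorem cell_subset_pos_iff (hσ : σ ∈ 𝓗.topes) : 𝓗.cell σ ⊆ 𝓗.pos i ↔ i ∈ σ := by
  obtain ⟨x, hx⟩ := mem_topes.1 hσ
  exact ⟨fun h ↦ (mem_iff_form_pos_of_mem_cell hx i).2 (mem_pos_iff_form.1 (h hx)),
    fun h y hy ↦ mem_pos_iff_form.2 ((mem_iff_form_pos_of_mem_cell hy i).1 h)⟩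

theorem cell_subset_neg_iff (hσ : σ ∈ 𝓗.topes) : 𝓗.cell σ ⊆ 𝓗.neg i ↔ i ∉ σ := by
  obtain ⟨x, hx⟩ := mem_topes.1 hσ
  exact ⟨fun h hi ↦
      (mem_neg_iff_form.1 (h hx)).asymm ((mem_iff_form_pos_of_mem_cell hx i).1 hi),
    fun h y hy ↦ mem_neg_iff_form.2 (form_neg_of_mem_cell hy h)⟩

theorem separates_cell_iff (hσ : σ ∈ 𝓗.topes) (hτ : τ ∈ 𝓗.topes) :
    𝓗.Separates i (𝓗.cell σ) (𝓗.cell τ) ↔ i ∈ σ ∆ τ := by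
  rw [Separates, cell_subset_pos_iff hσ, cell_subset_neg_iff hσ, cell_subset_pos_iff hτ,
    cell_subset_neg_iff hτ, Finset.mem_symmDiff]
  tauto

theorem adj_cell_symmDiff_singleton (hσ : σ ∈ 𝓗.topes) (hσi : σ ∆ {i} ∈ 𝓗.topes) :
    𝓗.Adj (𝓗.cell σ) (𝓗.cell (σ ∆ {i})) := by
  rw [Adj, chambers_eq_image_cell]
  refine ⟨mem_image_of_mem _ hσ, mem_image_of_mem _ hσi, ?_⟩
  simp only [separates_cell_iff hσ hσi, symmDiff_symmDiff_cancel_left, Finset.mem_singleton]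
  exact existsUnique_eq

theorem mem_closedCell_symmDiff_singleton (hz : z ∈ 𝓗.closedCell σ) (hzi : z ∈ 𝓗.H i) :
    z ∈ 𝓗.closedCell (σ ∆ {i}) := by
  intro l
  obtain rfl | hli := eq_or_ne l i
  · exact (signedForm_eq_zero_iff.2 hzi).ge
  · rw [signedForm_of_notMem_symmDiff (σ := σ) (by simpa [symmDiff_symmDiff_cancel_left] using hli)]
    exact hz l

theorem lineMap_div_sub_eq_zero {a b : ℝ} (ha : 0 ≤ a) (hb : b ≤ 0) :
    AffineMap.lineMap a b (a / (a - b)) = 0 := by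
  rw [AffineMap.lineMap_apply_ring']
  rcases eq_or_ne (a - b) 0 with h | h
  · rw [h, div_zero]; linarith
  · field

theorem lineMap_nonneg_of_le_div_sub {a b t : ℝ} (ha : 0 ≤ a) (hb : b ≤ 0)
    (ht : t ≤ a / (a - b)) : 0 ≤ AffineMap.lineMap a b t := by
  rw [AffineMap.lineMap_apply_ring']
  rcases (sub_nonneg.2 (hb.trans ha)).eq_or_lt with h | h
  · rw [← neg_sub, ← h]; linarith
  · rw [le_div_iff₀ h] at ht; linarith

/-- Take the separating hyperplane that the segment from `x` to `y` meets first. -/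
theorem exists_mem_closedCell_inter_H (hx : x ∈ 𝓗.closedCell σ) (hy : y ∈ 𝓗.closedCell τ)
    (hne : σ ≠ τ) : ∃ i ∈ σ ∆ τ, ∃ z ∈ segment ℝ x y, z ∈ 𝓗.closedCell σ ∩ 𝓗.H i := by
  -- the parameter at which the segment meets `𝓗.H i`; it is `0 / 0 = 0` for a segment that
  -- lies inside `𝓗.H i`
  let root (i : Fin n) : ℝ := 𝓗.signedForm σ i x / (𝓗.signedForm σ i x - 𝓗.signedForm σ i y)
  have hnonpos : ∀ i ∈ σ ∆ τ, 𝓗.signedForm σ i y ≤ 0 := by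
    intro i hi
    simpa [signedForm_of_mem_symmDiff hi] using hy i
  obtain ⟨i, hi, hmin⟩ := Finset.exists_min_image (σ ∆ τ) root
    (Finset.nonempty_iff_ne_empty.2 (mt symmDiff_eq_bot.1 hne))
  have hroot : root i ∈ Icc 0 1 :=
    ⟨div_nonneg (hx i) (by linarith [hx i, hnonpos i hi]),
      div_le_one_of_le₀ (by linarith [hnonpos i hi]) (by linarith [hx i, hnonpos i hi])⟩
  have hz : AffineMap.lineMap x y (root i) ∈ segment ℝ x y :=
    segment_eq_image_lineMap ℝ x y ▸ mem_image_of_mem _ hroot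
  refine ⟨i, hi, _, hz, fun l ↦ ?_, (signedForm_eq_zero_iff (σ := σ)).1 ?_⟩
  · by_cases hl : l ∈ σ ∆ τ
    · rw [AffineMap.apply_lineMap]
      exact lineMap_nonneg_of_le_div_sub (hx l) (hnonpos l hl) (hmin l hl)
    · have hyl : 0 ≤ 𝓗.signedForm σ l y := signedForm_of_notMem_symmDiff hl ▸ hy l
      exact ((convex_Ici 0).affine_preimage (𝓗.signedForm σ l)).segment_subset (hx l) hyl hz
  · rw [AffineMap.apply_lineMap]
    exact lineMap_div_sub_eq_zero (hx i) (hnonpos i hi)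

theorem exists_forall_form_eq {A : Finset (Fin n)}
    (hA : LinearIndependent ℝ fun i : A ↦ 𝓗.normal i) (c : Fin n → ℝ) :
    ∃ w, ∀ i ∈ A, 𝓗.form i w = c i := by
  have hrange : LinearMap.range (Matrix.of fun i : A ↦ 𝓗.normal i).mulVecLin = ⊤ := by
    apply Submodule.eq_top_of_finrank_eq
    rw [Module.finrank_fintype_fun_eq_card]
    exact LinearIndependent.rank_matrix hA
  obtain ⟨w, hw⟩ := LinearMap.range_eq_top.1 hrange fun i ↦ c i + 𝓗.offset i
  refine ⟨w, fun i hi ↦ ?_⟩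
  rw [form_apply, sub_eq_iff_eq_add]
  exact congrFun hw ⟨i, hi⟩

theorem GeneralPosition.card_le_of_mem_H (hgp : 𝓗.GeneralPosition) {A : Finset (Fin n)}
    (hA : ∀ i ∈ A, z ∈ 𝓗.H i) : #A ≤ d := by
  by_contra! hlt
  obtain ⟨B, hBA, hB⟩ := Finset.exists_subset_card_eq hlt
  exact (hgp.2 B hB).subset (mem_iInter₂.2 fun i hi ↦ hA i (hBA hi))

/-- From a point of `closedCell 𝓗 σ`, move slightly in a direction along which all the forms that
vanish there increase. -/
theorem GeneralPosition.mem_topes_of_mem_closedCell (hgp : 𝓗.GeneralPosition)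
    (hz : z ∈ 𝓗.closedCell σ) : σ ∈ 𝓗.topes := by
  classical
  let A : Finset (Fin n) := {i | z ∈ 𝓗.H i}
  have hA : #A ≤ d := hgp.card_le_of_mem_H (z := z) fun i hi ↦ by simpa [A] using hi
  obtain ⟨w, hw⟩ := exists_forall_form_eq (hgp.1 A hA) fun i ↦ if i ∈ σ then 1 else -1
  have hpos : ∀ i, ∀ᶠ t in 𝓝[>] (0 : ℝ), 0 < 𝓗.signedForm σ i (AffineMap.lineMap z w t) := by
    intro i
    by_cases hi : z ∈ 𝓗.H i
    · have hwi : 𝓗.signedForm σ i w = 1 := by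
        rw [signedForm_apply, hw i (by simpa [A] using hi)]
        split_ifs <;> simp
      filter_upwards [self_mem_nhdsWithin] with t ht
      rwa [AffineMap.apply_lineMap, signedForm_eq_zero_iff.2 hi, hwi, AffineMap.lineMap_apply_ring',
        sub_zero, mul_one, add_zero]
    · have hcont : Continuous fun t : ℝ ↦ 𝓗.signedForm σ i (AffineMap.lineMap z w t) :=
        (𝓗.signedForm σ i).continuous_of_finiteDimensional.comp AffineMap.lineMap_continuous
      refine nhdsWithin_le_nhds (hcont.continuousAt.eventually_const_lt ?_)
      simpa using (hz i).lt_of_ne' (mt signedForm_eq_zero_iff.1 hi)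
  obtain ⟨t, ht⟩ := (Filter.eventually_all.2 hpos).exists
  exact mem_topes.2 ⟨_, ht⟩

theorem GeneralPosition.wellGraded_topes (hgp : 𝓗.GeneralPosition) : WellGraded 𝓗.topes := by
  intro σ hσ τ hτ hne
  obtain ⟨x, hx⟩ := mem_topes.1 hσ
  obtain ⟨y, hy⟩ := mem_topes.1 hτ
  obtain ⟨i, hi, z, -, hzσ, hzi⟩ :=
    exists_mem_closedCell_inter_H (cell_subset_closedCell hx) (cell_subset_closedCell hy) hne
  exact ⟨i, hi, hgp.mem_topes_of_mem_closedCell (mem_closedCell_symmDiff_singleton hzσ hzi)⟩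

theorem GeneralPosition.mem_wallFamily_topes_iff (hgp : 𝓗.GeneralPosition) :
    σ ∈ wallFamily 𝓗.topes i ↔ (𝓗.closedCell σ ∩ 𝓗.H i).Nonempty := by
  rw [mem_wallFamily]
  constructor
  · rintro ⟨hσ, hσi⟩
    obtain ⟨x, hx⟩ := mem_topes.1 hσ
    obtain ⟨y, hy⟩ := mem_topes.1 hσi
    obtain ⟨l, hl, z, -, hz⟩ := exists_mem_closedCell_inter_H (cell_subset_closedCell hx)
      (cell_subset_closedCell hy) (Ne.symm (by simp))
    rw [symmDiff_symmDiff_cancel_left, Finset.mem_singleton] at hl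
    exact ⟨z, hl ▸ hz⟩
  · rintro ⟨z, hzσ, hzi⟩
    exact ⟨hgp.mem_topes_of_mem_closedCell hzσ,
      hgp.mem_topes_of_mem_closedCell (mem_closedCell_symmDiff_singleton hzσ hzi)⟩

theorem GeneralPosition.wellGraded_wallFamily_topes (hgp : 𝓗.GeneralPosition) (i : Fin n) :
    WellGraded (wallFamily 𝓗.topes i) := by
  intro σ hσ τ hτ hne
  obtain ⟨x, hx, hxi⟩ := hgp.mem_wallFamily_topes_iff.1 hσ
  obtain ⟨y, hy, hyi⟩ := hgp.mem_wallFamily_topes_iff.1 hτ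
  obtain ⟨l, hl, z, hzxy, hzσ, hzl⟩ := exists_mem_closedCell_inter_H hx hy hne
  exact ⟨l, hl, hgp.mem_wallFamily_topes_iff.2
    ⟨z, mem_closedCell_symmDiff_singleton hzσ hzl, (𝓗.convex_H i).segment_subset hxi hyi hzxy⟩⟩

theorem GeneralPosition.wallFamily_wallFamily_topes_nonempty (hgp : 𝓗.GeneralPosition)
    (hd : 2 ≤ d) (i j : Fin n) : (wallFamily (wallFamily 𝓗.topes i) j).Nonempty := by
  obtain ⟨z, hz⟩ := exists_forall_form_eq (hgp.1 {i, j} (Finset.card_le_two.trans hd)) 0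
  have hzi : z ∈ 𝓗.H i := mem_H_iff_form.2 (hz i (by simp))
  have hzj : z ∈ 𝓗.H j := mem_H_iff_form.2 (hz j (by simp))
  obtain ⟨σ, hσ⟩ := 𝓗.exists_mem_closedCell z
  exact ⟨σ, mem_wallFamily.2 ⟨hgp.mem_wallFamily_topes_iff.2 ⟨z, hσ, hzi⟩,
    hgp.mem_wallFamily_topes_iff.2 ⟨z, mem_closedCell_symmDiff_singleton hσ hzj, hzi⟩⟩⟩

/-- Take the difference of two points lying on opposite sides of each hyperplane in `s`. -/
theorem exists_normal_dotProduct_pos_neg_of_shatters {s t : Finset (Fin n)}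
    (hs : 𝓗.topes.Shatters s) (hts : t ⊆ s) :
    ∃ v, (∀ l ∈ t, 0 < 𝓗.normal l ⬝ᵥ v) ∧ ∀ l ∈ s \ t, 𝓗.normal l ⬝ᵥ v < 0 := by
  obtain ⟨σ, hσ, hσs⟩ := hs hts
  obtain ⟨τ, hτ, hτs⟩ := hs (Finset.sdiff_subset (s := s) (t := t))
  obtain ⟨x, hx⟩ := mem_topes.1 hσ
  obtain ⟨y, hy⟩ := mem_topes.1 hτ
  have hform : ∀ l, 𝓗.normal l ⬝ᵥ (x - y) = 𝓗.form l x - 𝓗.form l y := fun l ↦ by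
    rw [dotProduct_sub, form_apply, form_apply, sub_sub_sub_cancel_right]
  have hmem : ∀ l ∈ s, (l ∈ σ ↔ l ∈ t) ∧ (l ∈ τ ↔ l ∉ t) := fun l hl ↦
    ⟨by simpa [hl] using Finset.ext_iff.1 hσs l, by simpa [hl] using Finset.ext_iff.1 hτs l⟩
  refine ⟨x - y, fun l hl ↦ ?_, fun l hl ↦ ?_⟩
  · have hlσ : l ∈ σ := by grind
    have hlτ : l ∉ τ := by grind
    rw [hform, sub_pos]
    exact (form_neg_of_mem_cell hy hlτ).trans ((mem_iff_form_pos_of_mem_cell hx l).1 hlσ)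
  · have hlσ : l ∉ σ := by grind
    have hlτ : l ∈ τ := by grind
    rw [hform, sub_neg]
    exact (form_neg_of_mem_cell hx hlσ).trans ((mem_iff_form_pos_of_mem_cell hy l).1 hlτ)

/-- If the signs of the numbers `𝓗.normal l ⬝ᵥ v` match those of the coefficients of a linear
relation, then all terms of its product with `v` are nonnegative, hence zero. -/
theorem linearIndepOn_normal_of_shatters {s : Finset (Fin n)} (hs : 𝓗.topes.Shatters s) :
    LinearIndepOn ℝ 𝓗.normal (s : Set (Fin n)) := by
  rw [linearIndepOn_finset_iff]
  intro w hw
  obtain ⟨v, hpos, hneg⟩ :=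
    exists_normal_dotProduct_pos_neg_of_shatters hs (Finset.filter_subset (0 < w ·) s)
  have hsides : ∀ l ∈ s, 0 < w l ∧ 0 < 𝓗.normal l ⬝ᵥ v ∨ w l ≤ 0 ∧ 𝓗.normal l ⬝ᵥ v < 0 := by
    grind
  have hsum : ∑ l ∈ s, w l * (𝓗.normal l ⬝ᵥ v) = 0 := by
    simp_rw [← smul_eq_mul, ← smul_dotProduct]
    rw [← sum_dotProduct, hw, zero_dotProduct]
  have hterm : ∀ l ∈ s, 0 ≤ w l * (𝓗.normal l ⬝ᵥ v) := by
    intro l hl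
    rcases hsides l hl with ⟨h₁, h₂⟩ | ⟨h₁, h₂⟩
    · exact mul_nonneg h₁.le h₂.le
    · exact mul_nonneg_of_nonpos_of_nonpos h₁ h₂.le
  intro l hl
  have hzero := (Finset.sum_eq_zero_iff_of_nonneg hterm).1 hsum l hl
  refine (mul_eq_zero.1 hzero).resolve_right ?_
  rcases hsides l hl with ⟨-, h⟩ | ⟨-, h⟩
  exacts [h.ne', h.ne]

theorem vcDim_topes_le (𝓗 : Arrangement d n) : 𝓗.topes.vcDim ≤ d := by
  refine Finset.sup_le fun s hs ↦ ?_
  have hs' := linearIndepOn_normal_of_shatters (Finset.mem_shatterer.1 hs)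
  simpa using hs'.linearIndependent.fintype_card_le_finrank

theorem GeneralPosition.isPlanarFamily_topes {𝓗 : Arrangement 2 n} (hgp : 𝓗.GeneralPosition) :
    IsPlanarFamily 𝓗.topes where
  wellGraded := hgp.wellGraded_topes
  wellGraded_wallFamily := hgp.wellGraded_wallFamily_topes
  crossing := hgp.wallFamily_wallFamily_topes_nonempty le_rfl
  vcDim_le := 𝓗.vcDim_topes_le

theorem finite_edgeBoundary (𝓗 : Arrangement d n) (S : Set (Set (Fin d → ℝ))) :
    (𝓗.edgeBoundary S).Finite := by
  have hfin : 𝓗.chambers.Finite := by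
    rw [chambers_eq_image_cell]
    exact 𝓗.topes.finite_toSet.image _
  exact (hfin.prod hfin).subset fun q hq ↦ ⟨hq.2.2.1, hq.2.2.2.1⟩

theorem sum_boundaryFamily_le_ncard_edgeBoundary {𝒮 : Finset (Finset (Fin n))}
    (h𝒮 : 𝒮 ⊆ 𝓗.topes) :
    ∑ i, #(boundaryFamily 𝓗.topes 𝒮 i) ≤ (𝓗.edgeBoundary (𝓗.cell '' 𝒮)).ncard := by
  rw [← Finset.card_sigma, ← ncard_coe_finset]
  refine ncard_le_ncard_of_injOn (fun p ↦ (𝓗.cell p.2, 𝓗.cell (p.2 ∆ {p.1}))) ?_ ?_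
    (𝓗.finite_edgeBoundary _)
  · rintro ⟨i, σ⟩ hp
    obtain ⟨hσ, hσi, hσi'⟩ := mem_boundaryFamily.1 (Finset.mem_sigma.1 hp).2
    refine ⟨mem_image_of_mem _ hσ, ?_, adj_cell_symmDiff_singleton (h𝒮 hσ) hσi⟩
    rwa [injOn_cell_topes.mem_image_iff h𝒮 hσi]
  · rintro ⟨i, σ⟩ hp ⟨j, τ⟩ hq heq
    obtain ⟨hσ, hσi, -⟩ := mem_boundaryFamily.1 (Finset.mem_sigma.1 hp).2
    obtain ⟨hτ, hτj, -⟩ := mem_boundaryFamily.1 (Finset.mem_sigma.1 hq).2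
    obtain ⟨h₁, h₂⟩ := Prod.mk.inj heq
    obtain rfl := injOn_cell_topes (h𝒮 hσ) (h𝒮 hτ) h₁
    obtain rfl : i = j := by simpa using injOn_cell_topes hσi hτj h₂
    rfl

theorem GeneralPosition.ncard_le_one_add_choose_ncard_edgeBoundary {𝓗 : Arrangement 2 n}
    (hgp : 𝓗.GeneralPosition) {S : Set (Set (Fin 2 → ℝ))} (hS : S ⊆ 𝓗.chambers)
    (hhalf : 2 * S.ncard ≤ 𝓗.chambers.ncard) :
    S.ncard ≤ 1 + (𝓗.edgeBoundary S).ncard.choose 2 := by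
  rw [chambers_eq_image_cell] at hS hhalf
  obtain ⟨𝒮, h𝒮, rfl⟩ : ∃ 𝒮 : Finset (Finset (Fin n)), 𝒮 ⊆ 𝓗.topes ∧ 𝓗.cell '' 𝒮 = S := by
    obtain ⟨𝒮, h𝒮, rfl⟩ := subset_image_iff.1 hS
    lift 𝒮 to Finset (Finset (Fin n)) using 𝓗.topes.finite_toSet.subset h𝒮
    exact ⟨𝒮, Finset.coe_subset.1 h𝒮, rfl⟩
  rw [(injOn_cell_topes.mono h𝒮).ncard_image, injOn_cell_topes.ncard_image, ncard_coe_finset,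
    ncard_coe_finset] at hhalf
  rw [(injOn_cell_topes.mono h𝒮).ncard_image, ncard_coe_finset]
  exact (hgp.isPlanarFamily_topes.card_le_one_add_choose_sum_boundaryFamily h𝒮 hhalf).trans
    (by gcongr; exact sum_boundaryFamily_le_ncard_edgeBoundary h𝒮)

end Arrangement

/-- (Conjecture, proved in the plane.) Let `S` be an arbitrary subset
of at most half of the chambers of an arrangement in general position in `ℝ²`, with
`|S| = 1 + k + k(k-1)/2` for some real `k ≥ 1`. Then `|∂S| ≥ k + 1`. -/
theorem stmt9 {n : ℕ} (𝓗 : Arrangement 2 n) (hgp : 𝓗.GeneralPosition)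
    (S : Set (Set (Fin 2 → ℝ))) (hS : S ⊆ 𝓗.chambers)
    (hhalf : 2 * S.ncard ≤ (𝓗.chambers).ncard)
    (k : ℝ) (hk : 1 ≤ k)
    (hcard : (S.ncard : ℝ) = 1 + k + k * (k - 1) / 2) :
    k + 1 ≤ ((𝓗.edgeBoundary S).ncard : ℝ) := by
  have hmain := hgp.ncard_le_one_add_choose_ncard_edgeBoundary hS hhalf
  set m := (𝓗.edgeBoundary S).ncard
  have hmain' : (S.ncard : ℝ) ≤ 1 + m * (m - 1) / 2 := by
    rw [← Nat.cast_choose_two]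
    exact_mod_cast hmain
  by_contra! hlt
  nlinarith [m.cast_nonneg (α := ℝ)]
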